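/- Let $A = \mathbb{C}[x_0,\ldots,x_4]/I$ be an artinian complete intersection algebra with $I$ generated by $5$ quadrics. Let $Q \in A_2$ be nonzero and suppose $\mathcal{Z}(Q) = \{z \in A_1 : zQ = 0\}$ has dimension at least $3$. Then there exists a nonzero linear form $p \in U$ with $p^2 \in I^{-1}_2$; consequently $\dim \mathcal{Z}(Q) \leq 2$ for every nonzero $Q \in A_2$. -/

import Mathlib

open MvPolynomial

noncomputable section

/-- The linear form with coefficient vector `p`. -/
def linform {n : ℕ} (p : Fin n → ℂ) : MvPolynomial (Fin n) ℂ :=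
  ∑ i, MvPolynomial.C (p i) * MvPolynomial.X i

/-- The apolarity pairing `⟨f, g⟩ = ∑_α f_α g_α α!` between polynomial spaces
(`f` viewed in `S^d U^*`, `g` in `S^d U`). -/
def apolar {n : ℕ} (f g : MvPolynomial (Fin n) ℂ) : ℂ :=
  ∑ α ∈ f.support, f.coeff α * g.coeff α * ∏ i, ((α i).factorial : ℂ)

/-- The degree-`k` graded piece of `ℂ[x₀,…,x_{n-1}]/I`. -/
def gradedPiece {n : ℕ} (I : Ideal (MvPolynomial (Fin n) ℂ)) (k : ℕ) :
    Submodule ℂ (MvPolynomial (Fin n) ℂ ⧸ I) :=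
  Submodule.map (Ideal.Quotient.mkₐ ℂ I).toLinearMap
    (MvPolynomial.homogeneousSubmodule (Fin n) ℂ k)

/-- `a` is a non-zero-divisor modulo the ideal `K`. -/
def IsRegularMod {R : Type*} [CommRing R] (K : Ideal R) (a : R) : Prop :=
  ∀ u, a * u ∈ K → u ∈ K

/-- Each entry of the list is a non-zero-divisor modulo `K` and the preceding entries. -/
def IsRegularListMod {R : Type*} [CommRing R] : Ideal R → List R → Prop
  | _, [] => True
  | K, a :: L => IsRegularMod K a ∧ IsRegularListMod (K ⊔ Ideal.span {a}) L

section CommRing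

variable {R : Type*} [CommRing R] {K : Ideal R} {a b : R}

lemma mem_sup_span_singleton_iff {u : R} :
    u ∈ K ⊔ Ideal.span {a} ↔ ∃ w, u - a * w ∈ K := by
  rw [sup_comm, Ideal.mem_span_singleton_sup]
  constructor
  · rintro ⟨w, k, hk, rfl⟩
    exact ⟨w, by convert hk using 1; ring⟩
  · rintro ⟨w, hw⟩
    exact ⟨w, _, hw, by ring⟩

lemma isRegularListMod_append_singleton (L : List R) :
    ∀ K : Ideal R, IsRegularListMod K (L ++ [a]) ↔
      IsRegularListMod K L ∧ IsRegularMod (K ⊔ Ideal.ofList L) a := by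
  induction L with
  | nil => intro K; simp [IsRegularListMod]
  | cons b L ih =>
    intro K
    simp [IsRegularListMod, ih, and_assoc, sup_assoc]

/-- If `a, b` is a regular sequence modulo `K`, then `a` is regular modulo `K` and `b`. -/
lemma IsRegularMod.sup_span_of_swap (ha : IsRegularMod K a)
    (hab : IsRegularMod (K ⊔ Ideal.span {a}) b) : IsRegularMod (K ⊔ Ideal.span {b}) a := by
  intro u hu
  obtain ⟨w, hw⟩ := mem_sup_span_singleton_iff.1 hu
  have h1 : w ∈ K ⊔ Ideal.span {a} := hab w <| mem_sup_span_singleton_iff.2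
    ⟨u, by convert K.neg_mem hw using 1; ring⟩
  obtain ⟨w', hw'⟩ := mem_sup_span_singleton_iff.1 h1
  refine mem_sup_span_singleton_iff.2 ⟨w', ha _ ?_⟩
  convert K.add_mem hw (K.mul_mem_left b hw') using 1
  ring

lemma IsRegularMod.mem_sup_span_pow (ha : IsRegularMod K a)
    (hab : IsRegularMod (K ⊔ Ideal.span {a}) b) (n : ℕ) :
    ∀ u, b * u ∈ K → u ∈ K ⊔ Ideal.span {a ^ n} := by
  induction n with
  | zero => intro u _; simp
  | succ n ih =>
    intro u hu
    obtain ⟨w, hw⟩ := mem_sup_span_singleton_iff.1 (hab u (Ideal.mem_sup_left hu))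
    have h1 : b * w ∈ K := ha _ <| by
      convert K.sub_mem hu (K.mul_mem_left b hw) using 1; ring
    obtain ⟨w', hw'⟩ := mem_sup_span_singleton_iff.1 (ih w h1)
    refine mem_sup_span_singleton_iff.2 ⟨w', ?_⟩
    convert K.add_mem hw (K.mul_mem_left a hw') using 1
    ring

/-- A subspace generating an ideal that contains a regular element contains one itself. -/
lemma exists_isRegularMod_of_subspace {k : Type*} [Field k] [Infinite k] [Algebra k R]
    [IsNoetherianRing R] (V : Submodule k R) (hb : b ∈ Ideal.span (V : Set R))
    (hreg : IsRegularMod K b) : ∃ v ∈ V, IsRegularMod K v := by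
  by_contra! hV
  have hzero (r : R) : ¬ IsRegularMod K r ↔ ∃ P ∈ associatedPrimes R (R ⧸ K), r ∈ P := by
    have h := Set.ext_iff.1 (biUnion_associatedPrimes_eq_zero_divisors R (R ⧸ K)) r
    simp only [Set.mem_iUnion, SetLike.mem_coe, exists_prop, Set.mem_ofPred_eq] at h
    rw [h, IsRegularMod]
    push Not
    constructor
    · rintro ⟨u, hu, hu'⟩
      refine ⟨Ideal.Quotient.mk K u, by rwa [Ne, Ideal.Quotient.eq_zero_iff_mem], ?_⟩
      exact Ideal.Quotient.eq_zero_iff_mem.2 hu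
    · rintro ⟨x, hx, hx'⟩
      obtain ⟨u, rfl⟩ := Ideal.Quotient.mk_surjective x
      refine ⟨u, Ideal.Quotient.eq_zero_iff_mem.1 hx', ?_⟩
      rwa [Ne, Ideal.Quotient.eq_zero_iff_mem] at hx
  have : Finite (associatedPrimes R (R ⧸ K)) := associatedPrimes.finite R (R ⧸ K)
  obtain ⟨P, hP⟩ := Subspace.exists_eq_top_of_iUnion_eq_univ (k := k) (E := V)
    (p := fun P : associatedPrimes R (R ⧸ K) =>
      (P.1.restrictScalars k).comap V.subtype) <| by
    refine Set.eq_univ_of_forall fun v => ?_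
    obtain ⟨P, hP, hv⟩ := (hzero v).1 (hV v v.2)
    exact Set.mem_iUnion.2 ⟨⟨P, hP⟩, hv⟩
  refine (hzero b).2 ⟨P.1, P.2, Ideal.span_le.2 (fun v hv => ?_) hb⟩ hreg
  have : (⟨v, hv⟩ : V) ∈ (P.1.restrictScalars k).comap V.subtype := hP ▸ Submodule.mem_top
  exact this

end CommRing

section Graded

variable {n : ℕ} {K : Ideal (MvPolynomial (Fin n) ℂ)} {a b : MvPolynomial (Fin n) ℂ}

/-- `K` contains the homogeneous components of its elements. -/
def IsHomogeneousIdeal (K : Ideal (MvPolynomial (Fin n) ℂ)) : Prop :=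
  ∀ u ∈ K, ∀ d, homogeneousComponent d u ∈ K

lemma homogeneousComponent_mul_of_isHomogeneous {i d : ℕ} (ha : a.IsHomogeneous i) :
    homogeneousComponent d (a * b) =
      if i ≤ d then a * homogeneousComponent (d - i) b else 0 := by
  let : GradedAlgebra (homogeneousSubmodule (Fin n) ℂ) := gradedAlgebra
  have hdec (p : MvPolynomial (Fin n) ℂ) (e : ℕ) : (DirectSum.decompose
      (homogeneousSubmodule (Fin n) ℂ) p e : MvPolynomial (Fin n) ℂ) = homogeneousComponent e p :=
    decomposition.decompose'_apply p e
  rw [← hdec, ← hdec]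
  split_ifs with h
  · exact DirectSum.coe_decompose_mul_of_left_mem_of_le (homogeneousSubmodule (Fin n) ℂ) ha h
  · exact DirectSum.coe_decompose_mul_of_left_mem_of_not_le (homogeneousSubmodule (Fin n) ℂ) ha h

lemma isHomogeneousIdeal_bot : IsHomogeneousIdeal (⊥ : Ideal (MvPolynomial (Fin n) ℂ)) := by
  intro u hu d
  simp_all

lemma IsHomogeneousIdeal.sup_span_singleton (hK : IsHomogeneousIdeal K) {i : ℕ}
    (ha : a.IsHomogeneous i) : IsHomogeneousIdeal (K ⊔ Ideal.span {a}) := by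
  intro u hu d
  obtain ⟨w, hw⟩ := mem_sup_span_singleton_iff.1 hu
  have h := hK _ hw d
  rw [map_sub, homogeneousComponent_mul_of_isHomogeneous ha] at h
  split_ifs at h
  · exact mem_sup_span_singleton_iff.2 ⟨_, h⟩
  · exact Ideal.mem_sup_left (by simpa using h)

lemma IsHomogeneousIdeal.sup_ofList (L : List (MvPolynomial (Fin n) ℂ))
    (hL : ∀ a ∈ L, ∃ i, 0 < i ∧ a.IsHomogeneous i) :
    ∀ K : Ideal (MvPolynomial (Fin n) ℂ), IsHomogeneousIdeal K →
      IsHomogeneousIdeal (K ⊔ Ideal.ofList L) := by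
  induction L with
  | nil => intro K hK; simpa using hK
  | cons a L ih =>
    intro K hK
    obtain ⟨i, -, hi⟩ := hL a (by simp)
    rw [Ideal.ofList_cons, ← sup_assoc]
    exact ih (fun b hb => hL b (by simp [hb])) _ (hK.sup_span_singleton hi)

lemma isHomogeneousIdeal_ofList {L : List (MvPolynomial (Fin n) ℂ)}
    (hL : ∀ a ∈ L, ∃ i, 0 < i ∧ a.IsHomogeneous i) : IsHomogeneousIdeal (Ideal.ofList L) := by
  simpa using IsHomogeneousIdeal.sup_ofList L hL ⊥ isHomogeneousIdeal_bot

/-- A graded form of the Krull intersection theorem. -/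
lemma IsHomogeneousIdeal.mem_of_forall_mem_sup_span_pow (hK : IsHomogeneousIdeal K) {i : ℕ}
    (hi : 0 < i) (ha : a.IsHomogeneous i) {u : MvPolynomial (Fin n) ℂ}
    (hu : ∀ m, u ∈ K ⊔ Ideal.span {a ^ m}) : u ∈ K := by
  rw [← sum_homogeneousComponent u]
  refine K.sum_mem fun d _ => ?_
  obtain ⟨w, hw⟩ := mem_sup_span_singleton_iff.1 (hu (d + 1))
  have h := hK _ hw d
  have hlt : ¬ i * (d + 1) ≤ d := by nlinarith
  rwa [map_sub, homogeneousComponent_mul_of_isHomogeneous (ha.pow (d + 1)), if_neg hlt,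
    sub_zero] at h

lemma IsHomogeneousIdeal.isRegularMod_of_swap (hK : IsHomogeneousIdeal K) {i : ℕ}
    (hi : 0 < i) (hai : a.IsHomogeneous i) (ha : IsRegularMod K a)
    (hab : IsRegularMod (K ⊔ Ideal.span {a}) b) : IsRegularMod K b := fun u hu =>
  hK.mem_of_forall_mem_sup_span_pow hi hai fun m => ha.mem_sup_span_pow hab m u hu

/-- The last entry of a homogeneous regular sequence may be moved to the front. -/
lemma IsRegularListMod.cons_of_append_singleton (L : List (MvPolynomial (Fin n) ℂ))
    (hL : ∀ a ∈ L, ∃ i, 0 < i ∧ a.IsHomogeneous i) :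
    ∀ K : Ideal (MvPolynomial (Fin n) ℂ), IsHomogeneousIdeal K →
      IsRegularListMod K (L ++ [b]) → IsRegularListMod K (b :: L) := by
  induction L with
  | nil => intro K _ h; exact h
  | cons a L ih =>
    intro K hK h
    obtain ⟨i, hi, hai⟩ := hL a (by simp)
    obtain ⟨hb, hrest⟩ := ih (fun c hc => hL c (by simp [hc])) _ (hK.sup_span_singleton hai) h.2
    have hbK := hK.isRegularMod_of_swap hi hai h.1 hb
    refine ⟨hbK, h.1.sup_span_of_swap hb, ?_⟩
    rwa [sup_right_comm]

/-- The socle of the quotient by `K` vanishes in degrees below `s`. -/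
def SocleVanishesBelow (K : Ideal (MvPolynomial (Fin n) ℂ)) (s : ℤ) : Prop :=
  ∀ (d : ℕ) (f : MvPolynomial (Fin n) ℂ), f.IsHomogeneous d → (d : ℤ) < s →
    (∀ i, X i * f ∈ K) → f ∈ K

lemma mul_mem_of_forall_X_mul_mem {i : ℕ} (hi : 0 < i) (hb : b.IsHomogeneous i)
    {f : MvPolynomial (Fin n) ℂ} (hf : ∀ j, X j * f ∈ K) : b * f ∈ K := by
  have hle : Ideal.span (Set.range X) ≤
      Submodule.comap (LinearMap.mulRight (MvPolynomial (Fin n) ℂ) f) K :=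
    Ideal.span_le.2 (by rintro _ ⟨j, rfl⟩; exact hf j)
  refine hle (?_ : b ∈ Ideal.span (Set.range X))
  rw [← Set.image_univ, mem_ideal_span_X_image]
  intro m hm
  have hdeg : m.degree = i := by
    rw [Finsupp.degree_eq_weight_one]
    exact hb (mem_support_iff.1 hm)
  by_contra! h
  have : m = 0 := Finsupp.ext fun j => h j (Set.mem_univ j)
  subst this
  simp at hdeg
  omega

/-- Exchanging a generator of degree `j` for one of degree `i` shifts the socle by `i - j`. -/
lemma SocleVanishesBelow.exchange (hK : IsHomogeneousIdeal K) {i j : ℕ} (hj : 0 < j)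
    (hai : a.IsHomogeneous i) (hbj : b.IsHomogeneous j) (ha : IsRegularMod K a)
    (hb : IsRegularMod K b) {s : ℤ} (hs : SocleVanishesBelow (K ⊔ Ideal.span {b}) s) :
    SocleVanishesBelow (K ⊔ Ideal.span {a}) (s + i - j) := by
  intro d f hf hd hm
  obtain ⟨g₀, hg₀⟩ := mem_sup_span_singleton_iff.1 (mul_mem_of_forall_X_mul_mem hj hbj hm)
  have h := hK _ hg₀ (j + d)
  rw [map_sub, homogeneousComponent_mul_of_isHomogeneous hai,
    homogeneousComponent_of_mem ((mem_homogeneousSubmodule _ _).2 (hbj.mul hf)), if_pos rfl] at h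
  split_ifs at h with hle
  · set g := homogeneousComponent (j + d - i) g₀
    have hgK : g ∈ K ⊔ Ideal.span {b} := by
      refine hs (j + d - i) g (homogeneousComponent_isHomogeneous _ _) (by omega) fun l => ?_
      obtain ⟨w, hw⟩ := mem_sup_span_singleton_iff.1 (hm l)
      refine mem_sup_span_singleton_iff.2 ⟨w, ha _ ?_⟩
      convert K.sub_mem (K.mul_mem_left b hw) (K.mul_mem_left (X l) h) using 1
      ring
    obtain ⟨w, hw⟩ := mem_sup_span_singleton_iff.1 hgK
    refine mem_sup_span_singleton_iff.2 ⟨w, hb _ ?_⟩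
    convert K.add_mem h (K.mul_mem_left a hw) using 1
    ring
  · exact Ideal.mem_sup_left (hb _ (by simpa using h))

/-- A homogeneous regular sequence of forms of degree `N` in the ideal generated by a space `V` of
quadrics can be exchanged for a regular sequence in `V`. -/
lemma exists_regularList_of_exchange (V : Submodule ℂ (MvPolynomial (Fin n) ℂ))
    (hV : ∀ v ∈ V, v.IsHomogeneous 2) {N : ℕ} (hN : 0 < N)
    (M : List (MvPolynomial (Fin n) ℂ))
    (hM : ∀ y ∈ M, y.IsHomogeneous N ∧ y ∈ Ideal.span (V : Set (MvPolynomial (Fin n) ℂ))) :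
    ∀ (L : List (MvPolynomial (Fin n) ℂ)) (s : ℤ), (∀ v ∈ L, v ∈ V) →
      IsRegularListMod ⊥ (L ++ M) → SocleVanishesBelow (Ideal.ofList (L ++ M)) s →
      ∃ L' : List (MvPolynomial (Fin n) ℂ), L'.length = L.length + M.length ∧
        (∀ v ∈ L', v ∈ V) ∧ IsRegularListMod ⊥ L' ∧
        SocleVanishesBelow (Ideal.ofList L') (s + M.length * (2 - N)) := by
  induction M using List.reverseRecOn with
  | nil =>
    intro L s hL hreg hs
    exact ⟨L, by simp, hL, by simpa using hreg, by simpa using hs⟩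
  | append_singleton M y ih =>
    intro L s hL hreg hs
    rw [← List.append_assoc] at hreg hs
    obtain ⟨hyN, hyV⟩ := hM y (by simp)
    have hhom : ∀ a ∈ L ++ M, ∃ i, 0 < i ∧ a.IsHomogeneous i := by
      intro a ha
      rcases List.mem_append.1 ha with h | h
      · exact ⟨2, two_pos, hV a (hL a h)⟩
      · exact ⟨N, hN, (hM a (by simp [h])).1⟩
    obtain ⟨hLM, hy⟩ := (isRegularListMod_append_singleton (L ++ M) ⊥).1 hreg
    rw [bot_sup_eq] at hy
    obtain ⟨v, hvV, hv⟩ := exists_isRegularMod_of_subspace V hyV hy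
    have hsv := SocleVanishesBelow.exchange (isHomogeneousIdeal_ofList hhom) hN (hV v hvV) hyN hv
      hy (s := s) (by rwa [Ideal.ofList_append, Ideal.ofList_singleton] at hs)
    have hreg' : IsRegularListMod ⊥ (v :: L ++ M) :=
      IsRegularListMod.cons_of_append_singleton _ hhom _ isHomogeneousIdeal_bot
        ((isRegularListMod_append_singleton _ _).2 ⟨hLM, by rwa [bot_sup_eq]⟩)
    obtain ⟨L', hlen, hL'V, hL'reg, hL's⟩ := ih (fun y hy => hM y (by simp [hy])) (v :: L)
      (s + (2 : ℕ) - N) (by simpa using ⟨hvV, hL⟩) hreg'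
      (by rwa [List.cons_append, Ideal.ofList_cons, sup_comm])
    refine ⟨L', by simp [hlen]; omega, hL'V, hL'reg, ?_⟩
    convert hL's using 1
    push_cast [List.length_append, List.length_singleton]
    ring

/-- Membership in an ideal generated by `N`-th powers of variables. -/
lemma mem_ofList_X_pow_iff (l : List (Fin n)) (N : ℕ) (f : MvPolynomial (Fin n) ℂ) :
    f ∈ Ideal.ofList (l.map fun i => (X i : MvPolynomial (Fin n) ℂ) ^ N) ↔
      ∀ α ∈ f.support, ∃ i ∈ l, N ≤ α i := by
  have hset : {r | r ∈ l.map fun i => (X i : MvPolynomial (Fin n) ℂ) ^ N} =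
      (fun s => monomial s (1 : ℂ)) '' ((fun i => Finsupp.single i N) '' {i | i ∈ l}) := by
    ext r
    simp [X_pow_eq_monomial]
  rw [Ideal.ofList, hset, mem_ideal_span_monomial_image]
  simp

lemma isRegularListMod_X_pow (N : ℕ) (l : List (Fin n)) (hl : l.Nodup) :
    IsRegularListMod ⊥ (l.map fun i => (X i : MvPolynomial (Fin n) ℂ) ^ N) := by
  induction l using List.reverseRecOn with
  | nil => trivial
  | append_singleton l j ih =>
    obtain ⟨hl', hj⟩ : l.Nodup ∧ j ∉ l := by
      rw [List.nodup_append] at hl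
      exact ⟨hl.1, fun h => hl.2.2 j h j (by simp) rfl⟩
    rw [List.map_append, List.map_singleton, isRegularListMod_append_singleton, bot_sup_eq]
    refine ⟨ih hl', fun u hu => ?_⟩
    rw [mem_ofList_X_pow_iff] at hu ⊢
    intro α hα
    obtain ⟨i, hi, hle⟩ := hu (Finsupp.single j N + α) <| by
      rw [mem_support_iff, X_pow_eq_monomial, coeff_monomial_mul, one_mul]
      exact mem_support_iff.1 hα
    have hij : j ≠ i := fun h => hj (h ▸ hi)
    exact ⟨i, hi, by simpa [Finsupp.single_apply, hij] using hle⟩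

lemma socleVanishesBelow_X_pow (N : ℕ) :
    SocleVanishesBelow (Ideal.ofList ((List.finRange n).map fun i =>
      (X i : MvPolynomial (Fin n) ℂ) ^ N)) (n * (N - 1)) := by
  intro d f hf hd hm
  rw [mem_ofList_X_pow_iff]
  intro α hα
  by_contra! hlt
  have hdeg : ∑ i, α i = d := by
    rw [← Finsupp.degree_eq_sum, Finsupp.degree_eq_weight_one]
    exact hf (mem_support_iff.1 hα)
  obtain ⟨i, hi⟩ : ∃ i, α i + 1 < N := by
    by_contra! h
    have : ∑ _i : Fin n, ((N : ℤ) - 1) ≤ ∑ i, (α i : ℤ) :=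
      Finset.sum_le_sum fun i _ => by have := h i; omega
    rw [← Nat.cast_sum, hdeg] at this
    rw [Finset.sum_const, Finset.card_univ, Fintype.card_fin, nsmul_eq_mul] at this
    omega
  obtain ⟨j, hj, hle⟩ := (mem_ofList_X_pow_iff _ _ _).1 (hm i) (Finsupp.single i 1 + α) <| by
    rw [mem_support_iff, coeff_X_mul]
    exact mem_support_iff.1 hα
  have := hlt j hj
  by_cases hij : i = j
  · subst hij
    simp at hle
    omega
  · simp [hij] at hle
    omega

/-- Quadrics without a common projective zero span a regular sequence of length `n`, whose
quotient has socle only in degrees at least `n`. -/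
lemma exists_regularList_of_quadrics {ι : Type*} (q : ι → MvPolynomial (Fin n) ℂ)
    (hhom : ∀ i, (q i).IsHomogeneous 2)
    (hci : ∀ p : Fin n → ℂ, (∀ i, eval p (q i) = 0) → p = 0) :
    ∃ L : List (MvPolynomial (Fin n) ℂ), L.length = n ∧
      (∀ v ∈ L, v ∈ Submodule.span ℂ (Set.range q)) ∧ IsRegularListMod ⊥ L ∧
      SocleVanishesBelow (Ideal.ofList L) n := by
  have hrad (i : Fin n) : X i ∈ (Ideal.span (Set.range q)).radical := by
    rw [← vanishingIdeal_zeroLocus_eq_radical (K := ℂ), mem_vanishingIdeal_iff]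
    intro p hp
    have hp0 : p = 0 := hci p fun i => by
      have h := mem_zeroLocus_iff.1 hp (q i) (Ideal.subset_span ⟨i, rfl⟩)
      rwa [← coe_aeval_eq_eval]
    simp [hp0]
  choose e he using hrad
  set N := ∑ i, e i + 1 with hN
  have hpow (i : Fin n) : (X i : MvPolynomial (Fin n) ℂ) ^ N ∈ Ideal.span (Set.range q) := by
    refine Ideal.mem_of_dvd _ (pow_dvd_pow _ ?_) (he i)
    have := Finset.single_le_sum (f := e) (fun _ _ => Nat.zero_le _) (Finset.mem_univ i)
    omega
  have hV : ∀ v ∈ Submodule.span ℂ (Set.range q), v.IsHomogeneous 2 := by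
    intro v hv
    have hle : Submodule.span ℂ (Set.range q) ≤ homogeneousSubmodule (Fin n) ℂ 2 :=
      Submodule.span_le.2 (by rintro _ ⟨i, rfl⟩; exact hhom i)
    exact hle hv
  obtain ⟨L, hlen, hLV, hreg, hs⟩ := exists_regularList_of_exchange _ hV (N := N) (by omega)
    ((List.finRange n).map fun i => (X i : MvPolynomial (Fin n) ℂ) ^ N) (by
      intro y hy
      obtain ⟨i, -, rfl⟩ := List.mem_map.1 hy
      exact ⟨by simpa using (isHomogeneous_X ℂ i).pow N,
        Ideal.span_mono Submodule.subset_span (hpow i)⟩) [] (n * (N - 1)) (by simp)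
    (by simpa using isRegularListMod_X_pow N _ (List.nodup_finRange n))
    (by simpa using socleVanishesBelow_X_pow N)
  refine ⟨L, by simpa using hlen, hLV, hreg, ?_⟩
  convert hs using 1
  simp
  ring

end Graded

section Span

variable {n : ℕ}

lemma one_notMem_ofList {L : List (MvPolynomial (Fin n) ℂ)}
    (hL : ∀ a ∈ L, a.IsHomogeneous 2) : (1 : MvPolynomial (Fin n) ℂ) ∉ Ideal.ofList L := by
  intro h
  have hle : Ideal.ofList L ≤ RingHom.ker (constantCoeff (R := ℂ) (σ := Fin n)) :=
    Ideal.span_le.2 fun a ha => by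
      rw [SetLike.mem_coe, RingHom.mem_ker, constantCoeff_eq]
      exact (hL a ha).coeff_eq_zero (by simp)
  simpa using RingHom.mem_ker.1 (hle h)

lemma IsRegularListMod.length_le_finrank (L : List (MvPolynomial (Fin n) ℂ))
    (hL : ∀ a ∈ L, a.IsHomogeneous 2) (hreg : IsRegularListMod ⊥ L) :
    L.length ≤ Module.finrank ℂ (Submodule.span ℂ {a | a ∈ L}) := by
  induction L using List.reverseRecOn with
  | nil => simp
  | append_singleton L v ih =>
    have hL' : ∀ a ∈ L, a.IsHomogeneous 2 := fun a ha => hL a (by simp [ha])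
    obtain ⟨hregL, hv⟩ := (isRegularListMod_append_singleton _ _).1 hreg
    rw [bot_sup_eq] at hv
    have hfin : FiniteDimensional ℂ (Submodule.span ℂ {a | a ∈ L ++ [v]}) :=
      FiniteDimensional.span_of_finite ℂ (List.finite_toSet _)
    have hlt : Submodule.span ℂ {a | a ∈ L} < Submodule.span ℂ {a | a ∈ L ++ [v]} := by
      refine lt_of_le_of_ne (Submodule.span_mono fun a ha => by simp_all) fun heq => ?_
      have hvL : v ∈ Submodule.span ℂ {a | a ∈ L} :=
        heq ▸ Submodule.subset_span (by simp)
      have hvI : v ∈ Ideal.ofList L := by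
        have hle : Submodule.span ℂ {a | a ∈ L} ≤ (Ideal.ofList L).restrictScalars ℂ :=
          Submodule.span_le.2 Ideal.subset_span
        exact hle hvL
      exact one_notMem_ofList hL' (hv 1 (by rwa [mul_one]))
    have := Submodule.finrank_lt_finrank_of_lt hlt
    have := ih hL' hregL
    simp only [List.length_append, List.length_singleton]
    omega

/-- The socle of a complete intersection of `n` quadrics in `n` variables vanishes below
degree `n`. -/
lemma socleVanishesBelow_of_quadrics (q : Fin n → MvPolynomial (Fin n) ℂ)
    (hhom : ∀ i, (q i).IsHomogeneous 2)
    (hci : ∀ p : Fin n → ℂ, (∀ i, eval p (q i) = 0) → p = 0) :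
    SocleVanishesBelow (Ideal.span (Set.range q)) n := by
  obtain ⟨L, hlen, hLV, hreg, hs⟩ := exists_regularList_of_quadrics q hhom hci
  have hle : Submodule.span ℂ (Set.range q) ≤ homogeneousSubmodule (Fin n) ℂ 2 :=
    Submodule.span_le.2 (by rintro _ ⟨i, rfl⟩; exact hhom i)
  have hfin : FiniteDimensional ℂ (Submodule.span ℂ (Set.range q)) :=
    FiniteDimensional.span_of_finite ℂ (Set.finite_range q)
  have hspan : Submodule.span ℂ {a | a ∈ L} = Submodule.span ℂ (Set.range q) := by
    refine Submodule.eq_of_le_of_finrank_le (Submodule.span_le.2 hLV) ?_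
    calc _ ≤ Fintype.card (Fin n) := finrank_range_le_card q
      _ = L.length := by rw [Fintype.card_fin, hlen]
      _ ≤ _ := hreg.length_le_finrank L fun a ha => hle (hLV a ha)
  have hideal (s : Set (MvPolynomial (Fin n) ℂ)) :
      Ideal.span (Submodule.span ℂ s : Set (MvPolynomial (Fin n) ℂ)) = Ideal.span s :=
    Submodule.span_span_of_tower ℂ (MvPolynomial (Fin n) ℂ) s
  rwa [← hideal, ← hspan, hideal]

end Span

section Linform

variable {n : ℕ}

lemma linform_eq_linearCombination (p : Fin n → ℂ) :
    linform p = Fintype.linearCombination ℂ (X : Fin n → MvPolynomial (Fin n) ℂ) p := by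
  simp [linform, Fintype.linearCombination_apply, smul_eq_C_mul]

lemma isHomogeneous_linform (p : Fin n → ℂ) : (linform p).IsHomogeneous 1 :=
  IsHomogeneous.sum _ _ _ fun i _ => by
    simpa using (isHomogeneous_C _ (p i)).mul (isHomogeneous_X ℂ i)

lemma exists_eq_linform {g : MvPolynomial (Fin n) ℂ} (hg : g.IsHomogeneous 1) :
    ∃ p, g = linform p := by
  have h : g ∈ homogeneousSubmodule (Fin n) ℂ 1 := hg
  rw [homogeneousSubmodule_one_eq_span_X, ← Fintype.range_linearCombination] at h
  obtain ⟨p, rfl⟩ := h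
  exact ⟨p, (linform_eq_linearCombination p).symm⟩

lemma coeff_single_linform (p : Fin n → ℂ) (i : Fin n) :
    coeff (Finsupp.single i 1) (linform p) = p i := by
  simp [linform, coeff_sum, coeff_C_mul, coeff_X, Finsupp.single_left_inj]

lemma linform_eq_zero_iff {p : Fin n → ℂ} : linform p = 0 ↔ p = 0 := by
  refine ⟨fun h => funext fun i => ?_, fun h => by simp [h, linform]⟩
  rw [← coeff_single_linform p i, h]
  simp

end Linform

/-- Binary cubics are spanned by four monomials. -/
lemma finrank_homogeneousSubmodule_two_three_le :
    Module.Finite ℂ (homogeneousSubmodule (Fin 2) ℂ 3) ∧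
      Module.finrank ℂ (homogeneousSubmodule (Fin 2) ℂ 3) ≤ 4 := by
  let m : Fin 4 → MvPolynomial (Fin 2) ℂ := fun j => X 0 ^ (j : ℕ) * X 1 ^ (3 - (j : ℕ))
  have hle : homogeneousSubmodule (Fin 2) ℂ 3 ≤ Submodule.span ℂ (Set.range m) := by
    intro f hf
    rw [f.as_sum]
    refine Submodule.sum_mem _ fun α hα => ?_
    have hdeg : α 0 + α 1 = 3 := by
      rw [← Fin.sum_univ_two, ← Finsupp.degree_eq_sum, Finsupp.degree_eq_weight_one]
      exact hf (mem_support_iff.1 hα)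
    have hmon : monomial α (coeff α f) = coeff α f • m ⟨α 0, by omega⟩ := by
      rw [monomial_eq, smul_eq_C_mul, Finsupp.prod_fintype _ _ (by simp), Fin.prod_univ_two]
      simp only [m]
      congr 3
      omega
    rw [hmon]
    exact Submodule.smul_mem _ _ (Submodule.subset_span ⟨_, rfl⟩)
  have hfin : FiniteDimensional ℂ (Submodule.span ℂ (Set.range m)) :=
    FiniteDimensional.span_of_finite ℂ (Set.finite_range m)
  exact ⟨Submodule.finiteDimensional_of_le hle,
    (Submodule.finrank_mono hle).trans ((finrank_range_le_card m).trans (by simp))⟩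

/-- Binary quadrics without a common zero generate an ideal containing all cubics. -/
lemma cubic_mem_span_of_binary_quadrics {ι : Type*} (q : ι → MvPolynomial (Fin 2) ℂ)
    (hhom : ∀ i, (q i).IsHomogeneous 2)
    (hci : ∀ p : Fin 2 → ℂ, (∀ i, eval p (q i) = 0) → p = 0)
    {g : MvPolynomial (Fin 2) ℂ} (hg : g.IsHomogeneous 3) : g ∈ Ideal.span (Set.range q) := by
  obtain ⟨L, hlen, hLV, hreg, -⟩ := exists_regularList_of_quadrics q hhom hci
  obtain ⟨a, b, rfl⟩ := List.length_eq_two.1 hlen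
  obtain ⟨ha, hb, -⟩ := hreg
  have hle : Submodule.span ℂ (Set.range q) ≤ homogeneousSubmodule (Fin 2) ℂ 2 :=
    Submodule.span_le.2 (by rintro _ ⟨i, rfl⟩; exact hhom i)
  have hleI : Submodule.span ℂ (Set.range q) ≤ (Ideal.span (Set.range q)).restrictScalars ℂ :=
    Submodule.span_le.2 Ideal.subset_span
  have haV := hLV a (by simp)
  have hbV := hLV b (by simp)
  let ℓ := Fintype.linearCombination ℂ (X : Fin 2 → MvPolynomial (Fin 2) ℂ)
  let T : (Fin 2 → ℂ) × (Fin 2 → ℂ) →ₗ[ℂ] MvPolynomial (Fin 2) ℂ :=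
    (LinearMap.mulLeft ℂ a ∘ₗ ℓ).coprod (LinearMap.mulLeft ℂ b ∘ₗ ℓ)
  have hT (p r : Fin 2 → ℂ) : T (p, r) = a * linform p + b * linform r := by
    simp [T, ℓ, linform_eq_linearCombination]
  have hinj : Function.Injective T := by
    refine (injective_iff_map_eq_zero T).2 ?_
    rintro ⟨p, r⟩ h
    rw [hT] at h
    have hr : linform r = 0 := by
      obtain ⟨w, hw⟩ := mem_sup_span_singleton_iff.1 (hb (linform r)
        (mem_sup_span_singleton_iff.2 ⟨-linform p, by
          rw [Ideal.mem_bot, ← h]; ring⟩))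
      rw [Ideal.mem_bot, sub_eq_zero] at hw
      have hc := homogeneousComponent_of_mem (m := 1) (n := 1)
        ((mem_homogeneousSubmodule _ _).2 (isHomogeneous_linform r))
      rw [if_pos rfl] at hc
      rw [← hc, hw, homogeneousComponent_mul_of_isHomogeneous (hle haV), if_neg (by norm_num)]
    have hp : linform p = 0 := by
      simpa using ha (linform p) (by simpa [hr] using h)
    rw [linform_eq_zero_iff] at hp hr
    simp [hp, hr]
  have hrange : LinearMap.range T = homogeneousSubmodule (Fin 2) ℂ 3 := by
    have hfin := finrank_homogeneousSubmodule_two_three_le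
    have := hfin.1
    refine Submodule.eq_of_le_of_finrank_le ?_ ?_
    · rintro _ ⟨⟨p, r⟩, rfl⟩
      rw [hT]
      exact IsHomogeneous.add ((hle haV).mul (isHomogeneous_linform p))
        ((hle hbV).mul (isHomogeneous_linform r))
    · rw [LinearMap.finrank_range_of_inj hinj]
      simpa using hfin.2
  have hgT : g ∈ LinearMap.range T := hrange ▸ hg
  obtain ⟨⟨p, r⟩, rfl⟩ := hgT
  rw [hT]
  exact Ideal.add_mem _ (Ideal.mul_mem_right _ _ (hleI haV)) (Ideal.mul_mem_right _ _ (hleI hbV))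

/-- An ideal containing three independent linear forms in five variables and quadrics without a
common projective zero contains all cubics. -/
lemma cubic_mem_of_linform_mem {ι : Type*} (q : ι → MvPolynomial (Fin 5) ℂ)
    (hhom : ∀ i, (q i).IsHomogeneous 2)
    (hci : ∀ p : Fin 5 → ℂ, (∀ i, eval p (q i) = 0) → p = 0)
    {J : Ideal (MvPolynomial (Fin 5) ℂ)} (hq : ∀ i, q i ∈ J)
    {w : Fin 3 → Fin 5 → ℂ} (hw : LinearIndependent ℂ w) (hwJ : ∀ k, linform (w k) ∈ J)
    {g : MvPolynomial (Fin 5) ℂ} (hg : g.IsHomogeneous 3) : g ∈ J := by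
  set W := Submodule.span ℂ (Set.range w)
  have hWJ : ∀ p ∈ W, linform p ∈ J := by
    have hle : W ≤ (J.restrictScalars ℂ).comap
        (Fintype.linearCombination ℂ (X : Fin 5 → MvPolynomial (Fin 5) ℂ)) := by
      refine Submodule.span_le.2 ?_
      rintro _ ⟨k, rfl⟩
      simpa [linform_eq_linearCombination] using hwJ k
    intro p hp
    rw [linform_eq_linearCombination]
    exact hle hp
  have hrank : Module.finrank ℂ ((Fin 5 → ℂ) ⧸ W) = 2 := by
    have h1 := W.finrank_quotient_add_finrank
    have h2 : Module.finrank ℂ W = 3 := by simpa using finrank_span_eq_card hw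
    simp at h1
    omega
  let b := Module.finBasisOfFinrankEq ℂ _ hrank
  choose c hc using fun j => W.mkQ_surjective (b j)
  let e (i : Fin 5) : Fin 5 → ℂ := Pi.single i 1
  let φ : MvPolynomial (Fin 5) ℂ →ₐ[ℂ] MvPolynomial (Fin 2) ℂ :=
    aeval fun i => linform (b.repr (W.mkQ (e i)))
  let ψ : MvPolynomial (Fin 2) ℂ →ₐ[ℂ] MvPolynomial (Fin 5) ℂ := aeval fun j => linform (c j)
  have hψφ (p : MvPolynomial (Fin 5) ℂ) : p - ψ (φ p) ∈ J := by
    rw [← Ideal.Quotient.mk_eq_mk_iff_sub_mem]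
    have hcomp : Ideal.Quotient.mkₐ ℂ J = (Ideal.Quotient.mkₐ ℂ J).comp (ψ.comp φ) := by
      refine algHom_ext fun i => ?_
      refine (Ideal.Quotient.mk_eq_mk_iff_sub_mem _ _).2 ?_
      have hlin : X i - ψ (φ (X i)) =
          linform (e i - ∑ j, b.repr (W.mkQ (e i)) j • c j) := by
        have hX : ψ (φ (X i)) = ∑ j, b.repr (W.mkQ (e i)) j • linform (c j) := by
          simp [φ, ψ, linform.eq_1 (n := 2), smul_eq_C_mul]
        rw [hX]
        simp only [linform_eq_linearCombination, map_sub, map_sum, map_smul, e,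
          Fintype.linearCombination_apply_single, one_smul]
      change X i - ψ (φ (X i)) ∈ J
      rw [hlin]
      refine hWJ _ ?_
      rw [← Submodule.Quotient.mk_eq_zero, ← W.mkQ_apply, map_sub, map_sum]
      simp only [map_smul, hc]
      rw [b.sum_repr, sub_self]
    exact DFunLike.congr_fun hcomp p
  have hmem : φ g ∈ Ideal.span (Set.range fun i => φ (q i)) := by
    refine cubic_mem_span_of_binary_quadrics _
      (fun i => (hhom i).aeval (n := 1) _ fun _ => isHomogeneous_linform _) ?_
      (hg.aeval (n := 1) _ fun _ => isHomogeneous_linform _)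
    intro p hp
    let lam : (Fin 5 → ℂ) →ₗ[ℂ] ℂ := (b.constr ℂ p) ∘ₗ W.mkQ
    have heval (f : MvPolynomial (Fin 5) ℂ) :
        eval p (φ f) = eval (fun i => lam (e i)) f := by
      have hcomp : (aeval p).comp φ = aeval (R := ℂ) fun i => lam (e i) := by
        refine algHom_ext fun i => ?_
        simp [φ, lam, linform, Module.Basis.constr_apply_fintype]
      simpa [coe_aeval_eq_eval] using DFunLike.congr_fun hcomp f
    have hlam : lam = 0 := by
      have h0 := hci (fun i => lam (e i)) fun i => by rw [← heval]; exact hp i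
      refine LinearMap.pi_ext' fun i => LinearMap.ext_ring ?_
      exact congrFun h0 i
    funext j
    have hj : lam (c j) = p j := by simp only [lam, LinearMap.comp_apply, hc, b.constr_basis]
    rw [← hj, hlam]
    rfl
  have hψ : Ideal.span (Set.range fun i => φ (q i)) ≤ J.comap ψ := by
    refine Ideal.span_le.2 ?_
    rintro _ ⟨i, rfl⟩
    have := J.sub_mem (hq i) (hψφ (q i))
    simpa using this
  have := J.add_mem (hψφ g) (hψ hmem)
  simpa using this

/-- A nonzero quadric in the quotient by a complete intersection of five quadrics is annihilated by
at most two independent linear forms. -/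
lemma finrank_annihilator_le_two (q : Fin 5 → MvPolynomial (Fin 5) ℂ)
    (hhom : ∀ i, (q i).IsHomogeneous 2)
    (hci : ∀ p : Fin 5 → ℂ, (∀ i, eval p (q i) = 0) → p = 0)
    (Q : MvPolynomial (Fin 5) ℂ ⧸ Ideal.span (Set.range q))
    (hQ : Q ∈ gradedPiece (Ideal.span (Set.range q)) 2) (hQ0 : Q ≠ 0) :
    Module.finrank ℂ
      ((gradedPiece (Ideal.span (Set.range q)) 1 ⊓ LinearMap.ker (LinearMap.mulLeft ℂ Q) :
        Submodule ℂ (MvPolynomial (Fin 5) ℂ ⧸ Ideal.span (Set.range q)))) ≤ 2 := by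
  by_contra! hlt
  set I := Ideal.span (Set.range q)
  obtain ⟨f, hf, rfl⟩ := hQ
  obtain ⟨z, hz⟩ := exists_linearIndependent_of_le_finrank (Nat.succ_le_of_lt hlt)
  have hlift (k : Fin 3) : ∃ p : Fin 5 → ℂ, Ideal.Quotient.mkₐ ℂ I (linform p) = z k := by
    obtain ⟨g, hg, hgz⟩ := (z k).2.1
    obtain ⟨p, rfl⟩ := exists_eq_linform hg
    exact ⟨p, hgz⟩
  choose w hw using hlift
  have hwli : LinearIndependent ℂ w := by
    let T := (Ideal.Quotient.mkₐ ℂ I).toLinearMap ∘ₗ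
      Fintype.linearCombination ℂ (X : Fin 5 → MvPolynomial (Fin 5) ℂ)
    have hT : T ∘ w = fun k => (z k : MvPolynomial (Fin 5) ℂ ⧸ I) := by
      funext k
      rw [Function.comp_apply, LinearMap.comp_apply, ← linform_eq_linearCombination]
      exact hw k
    refine LinearIndependent.of_comp T ?_
    rw [hT]
    exact hz.map' (Submodule.subtype _) (Submodule.ker_subtype _)
  let J : Ideal (MvPolynomial (Fin 5) ℂ) :=
    Submodule.comap (LinearMap.mulRight (MvPolynomial (Fin 5) ℂ) f) I
  have hcubic (g : MvPolynomial (Fin 5) ℂ) (hg : g.IsHomogeneous 3) : g * f ∈ I := by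
    refine cubic_mem_of_linform_mem q hhom hci (J := J)
      (fun i => I.mul_mem_right f (Ideal.subset_span ⟨i, rfl⟩)) hwli (fun k => ?_) hg
    have hk : Ideal.Quotient.mkₐ ℂ I f * z k = 0 := (z k).2.2
    rw [← hw k, ← map_mul, mul_comm] at hk
    exact (Ideal.Quotient.eq_zero_iff_mem (I := I)).1 hk
  have hsoc := socleVanishesBelow_of_quadrics q hhom hci
  have hdown (d : ℕ) (hd : d < 3)
      (h : ∀ g : MvPolynomial (Fin 5) ℂ, g.IsHomogeneous (d + 1) → g * f ∈ I)
      (g : MvPolynomial (Fin 5) ℂ) (hg : g.IsHomogeneous d) : g * f ∈ I := by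
    refine hsoc (d + 2) (g * f) (hg.mul hf) (by push_cast; omega) fun i => ?_
    rw [← mul_assoc]
    exact h _ (by simpa [add_comm] using (isHomogeneous_X ℂ i).mul hg)
  have h0 := hdown 0 (by norm_num) (hdown 1 (by norm_num) (hdown 2 (by norm_num) hcubic)) 1
    (isHomogeneous_one _ _)
  rw [one_mul] at h0
  exact hQ0 (Ideal.Quotient.eq_zero_iff_mem.2 h0)

/-- for an artinian complete intersection `A = ℂ[x₀,…,x₄]/I` of 5 quadrics and
a nonzero `Q ∈ A_2`, if `Z(Q) = {z ∈ A_1 : zQ = 0}` had dimension at least 3 there would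
exist a nonzero linear form `p ∈ U` with `p² ∈ I⁻¹_2` (i.e. `p²` apolar to all generators);
consequently `dim Z(Q) ≤ 2` for every nonzero `Q ∈ A_2`. -/
theorem stmt16 (q : Fin 5 → MvPolynomial (Fin 5) ℂ)
    (hhom : ∀ i, (q i).IsHomogeneous 2)
    (hci : ∀ p : Fin 5 → ℂ, (∀ i, MvPolynomial.eval p (q i) = 0) → p = 0) :
    (∀ Q ∈ gradedPiece (Ideal.span (Set.range q)) 2, Q ≠ 0 →
        3 ≤ Module.finrank ℂ
          ((gradedPiece (Ideal.span (Set.range q)) 1 ⊓ LinearMap.ker (LinearMap.mulLeft ℂ Q) :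
            Submodule ℂ (MvPolynomial (Fin 5) ℂ ⧸ Ideal.span (Set.range q)))) →
        ∃ p : Fin 5 → ℂ, p ≠ 0 ∧ ∀ i, apolar (q i) (linform p ^ 2) = 0) ∧
      ∀ Q ∈ gradedPiece (Ideal.span (Set.range q)) 2, Q ≠ 0 →
        Module.finrank ℂ
          ((gradedPiece (Ideal.span (Set.range q)) 1 ⊓ LinearMap.ker (LinearMap.mulLeft ℂ Q) :
            Submodule ℂ (MvPolynomial (Fin 5) ℂ ⧸ Ideal.span (Set.range q)))) ≤ 2 := by
  refine ⟨fun Q hQ hQ0 h3 => ?_, fun Q hQ hQ0 => finrank_annihilator_le_two q hhom hci Q hQ hQ0⟩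
  have := finrank_annihilator_le_two q hhom hci Q hQ hQ0
  omega
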